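/- There exists a subshift Σ with h_ℳ(Σ) = 0 (vanishing entropy of minimal forbidden words) and yet h*_𝒞(Σ) = h_top(Σ) > 0. -/

import Mathlib

open Filter Set MeasureTheory

namespace QFTPaper

variable {A : Type*} {B : Type*}

/-- The left shift on bi-infinite sequences over the alphabet `A`. -/
def shift (x : ℤ → A) : ℤ → A := fun n => x (n + 1)

/-- A subshift: a closed, shift-invariant subset of `A^ℤ`. -/
def IsSubshift [TopologicalSpace A] (X : Set (ℤ → A)) : Prop :=
  IsClosed X ∧ shift '' X = X

/-- The finite word `w` occurs in `x` at position `k`. -/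
def OccursAt (w : List A) (x : ℤ → A) (k : ℤ) : Prop :=
  ∀ i : Fin w.length, x (k + (i : ℕ)) = w.get i

/-- The language of `X`: words of length `n` occurring in elements of `X`
(at position `0`, which is no restriction by shift-invariance). -/
def Lang (X : Set (ℤ → A)) (n : ℕ) : Set (List A) :=
  { w | w.length = n ∧ ∃ x ∈ X, OccursAt w x 0 }

/-- Topological entropy of a subshift. -/
noncomputable def hTop (X : Set (ℤ → A)) : ℝ :=
  limsup (fun n : ℕ => Real.log (Nat.card ↥(Lang X n)) / (n : ℝ)) atTop

/-- Follower set of the finite word `w = A₋ₙ…A₀` (listed from `A₋ₙ` to `A₀`):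
the set of one-sided sequences `B₀B₁B₂…` with `B ∈ X` and `B₋ₙ…B₀ = A₋ₙ…A₀`,
realized by requiring `w` to occur in `B` at positions `0,…,n` and reading off
the tail of `B` starting at the position of the last letter of `w`.
For the empty word this gives `X₊` (by shift-invariance). -/
def fol (X : Set (ℤ → A)) (w : List A) : Set (ℕ → A) :=
  { y | ∃ B ∈ X, (∀ i : Fin w.length, B ((i : ℕ) : ℤ) = w.get i) ∧
        ∀ k : ℕ, y k = B ((w.length : ℤ) - 1 + (k : ℤ)) }

/-- `w = A₋ₙ…A₀` is a left constraint:
`∅ ≠ fol(A₋ₙ…A₀) ⊊ fol(A₋ₙ₊₁…A₀)`. -/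
def IsLeftConstraint (X : Set (ℤ → A)) (w : List A) : Prop :=
  w ≠ [] ∧ fol X w ≠ ∅ ∧ fol X w ⊂ fol X w.tail

/-- `𝒞(X, n)`: the set of left constraints of length `n`. -/
def LC (X : Set (ℤ → A)) (n : ℕ) : Set (List A) :=
  { w | w.length = n ∧ IsLeftConstraint X w }

/-- The left constraint entropy `h_𝒞(X) = limsup (1/n) log⁺ #𝒞(X,n)`. -/
noncomputable def hC (X : Set (ℤ → A)) : ℝ :=
  limsup (fun n : ℕ => max 0 (Real.log (Nat.card ↥(LC X n))) / (n : ℝ)) atTop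

/-- The time-reversed subshift `X̄`. -/
def rev (X : Set (ℤ → A)) : Set (ℤ → A) :=
  (fun x : ℤ → A => fun n : ℤ => x (-n)) '' X

/-- The symmetric constraint entropy `h_𝒮𝒞(X) = min (h_𝒞(X), h_𝒞(X̄))`. -/
noncomputable def hSC (X : Set (ℤ → A)) : ℝ := min (hC X) (hC (rev X))

/-- Subshift of quasi-finite type: `h_𝒮𝒞(X) < h_top(X)`. -/
def IsQFT [TopologicalSpace A] (X : Set (ℤ → A)) : Prop :=
  IsSubshift X ∧ hSC X < hTop X

/-- The word `B₋ₘ…B₀` read off from a one-sided past `b` (where `b j = B₋ⱼ`). -/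
def wordOf (b : ℕ → A) (m : ℕ) : List A :=
  (List.range (m + 1)).map fun j => b (m - j)

/-- An extendable left constraint: a left constraint `A₋ₙ…A₀` which admits a
one-sided past `B` extending it such that `B₋ₘ…B₀` is again a left constraint
for infinitely many `m`. -/
def IsExtendable (X : Set (ℤ → A)) (w : List A) : Prop :=
  IsLeftConstraint X w ∧
  ∃ b : ℕ → A, wordOf b (w.length - 1) = w ∧
    ∀ N : ℕ, ∃ m, N ≤ m ∧ IsLeftConstraint X (wordOf b m)

/-- `𝒞*(X, n)`: the set of extendable left constraints of length `n`. -/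
def ELC (X : Set (ℤ → A)) (n : ℕ) : Set (List A) :=
  { w | w.length = n ∧ IsExtendable X w }

/-- The extendable left constraint entropy `h*_𝒞(X)`. -/
noncomputable def hCstar (X : Set (ℤ → A)) : ℝ :=
  limsup (fun n : ℕ => Real.log (Nat.card ↥(ELC X n)) / (n : ℝ)) atTop

/-- `h*_𝒮𝒞(X) = min (h*_𝒞(X), h*_𝒞(X̄))`. -/
noncomputable def hSCstar (X : Set (ℤ → A)) : ℝ := min (hCstar X) (hCstar (rev X))

/-- Subshift of weak quasi-finite type: `h*_𝒮𝒞(X) < h_top(X)`. -/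
def IsWeakQFT [TopologicalSpace A] (X : Set (ℤ → A)) : Prop :=
  IsSubshift X ∧ hSCstar X < hTop X

/-- Subshift of finite type: defined by excluding a finite set of finite words. -/
def IsSFT (X : Set (ℤ → A)) : Prop :=
  ∃ F : Finset (List A), X = { x | ∀ w ∈ F, ∀ k : ℤ, ¬ OccursAt w x k }

/-- Sofic subshift: the image of an SFT under a continuous shift-commuting map. -/
def IsSofic [TopologicalSpace A] (X : Set (ℤ → A)) : Prop :=
  ∃ (B : Type) (_ : Fintype B) (Y : Set (ℤ → B)) (π : (ℤ → B) → (ℤ → A)),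
    IsSFT Y ∧
    (letI : TopologicalSpace B := ⊥
     Continuous π) ∧
    (∀ x : ℤ → B, π (shift x) = shift (π x)) ∧ π '' Y = X


/-- Topological conjugacy of subshifts: a homeomorphism commuting with the shifts. -/
def Conjugate [TopologicalSpace A] [TopologicalSpace B]
    (X : Set (ℤ → A)) (Y : Set (ℤ → B)) : Prop :=
  ∃ φ : X ≃ₜ Y, ∀ x x' : X, (x' : ℤ → A) = shift (x : ℤ → A) →
    (φ x' : ℤ → B) = shift (φ x : ℤ → B)

/-- The cylinder of a word of length `n` placed at positions `0,…,n-1`. -/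
def cylSet (n : ℕ) (w : Fin n → A) : Set (ℤ → A) :=
  { x | ∀ i : Fin n, x ((i : ℕ) : ℤ) = w i }

/-- Entropy of the partition of `A^ℤ` into cylinders of length `n`. -/
noncomputable def blockEntropy [Fintype A] [MeasurableSpace A]
    (μ : Measure (ℤ → A)) (n : ℕ) : ℝ :=
  ∑ w : Fin n → A, Real.negMulLog ((μ (cylSet n w)).toReal)

/-- Kolmogorov–Sinai entropy of a shift-invariant measure on `A^ℤ`,
computed with the natural (generating) partition into cylinders. -/
noncomputable def KSEntropy [Fintype A] [MeasurableSpace A]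
    (μ : Measure (ℤ → A)) : ℝ :=
  ⨅ n : ℕ, blockEntropy μ (n + 1) / (n + 1)

/-- A maximum measure: an ergodic shift-invariant Borel probability measure
carried by `X` whose Kolmogorov–Sinai entropy equals the topological entropy of `X`. -/
def IsMaxMeasure [Fintype A] [MeasurableSpace A]
    (X : Set (ℤ → A)) (μ : Measure (ℤ → A)) : Prop :=
  IsProbabilityMeasure μ ∧ μ Xᶜ = 0 ∧ Ergodic shift μ ∧ KSEntropy μ = hTop X

/-- The number of points of `X` fixed by the `n`-th power of the shift. -/
noncomputable def perCount (X : Set (ℤ → A)) (n : ℕ) : ℕ :=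
  Nat.card {x : ℤ → A | x ∈ X ∧ shift^[n] x = x}

/-- The set of minimal forbidden words of length `n`: words not occurring in
`X` both of whose maximal proper subwords occur in `X`. -/
def MinForbidden (X : Set (ℤ → A)) (n : ℕ) : Set (List A) :=
  { w | w.length = n ∧ w ∉ Lang X n ∧
        w.dropLast ∈ Lang X (n - 1) ∧ w.tail ∈ Lang X (n - 1) }

/-- The entropy of minimal forbidden words `h_ℳ(X)`. -/
noncomputable def hM (X : Set (ℤ → A)) : ℝ :=
  limsup (fun n : ℕ =>
    max 0 (Real.log (Nat.card ↥(MinForbidden X n))) / (n : ℝ)) atTop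

/-!
The sequences of the example run through free bits, then gaps, then marks, subject to one family
of forbidden words: for every bit word `v` of length `m`, the word `1v gap^(m²) mark`. Followed by
`gap^(m²) mark`, the word `v` is admissible while `1v` is not, so every `1v` is a left constraint;
as any word of bits can be continued to the left by `1`s, every `1v` is even extendable. Hence the
`2 ^ m` extendable left constraints of length `m + 1` already account for the whole topological
entropy `log 2`, the gaps and marks multiplying the number of words by a bounded factor only.
The minimal forbidden words, on the other hand, are forbidden words from the definition, and those
of length `N = m + m² + 2` number only `2 ^ m ≤ 2 ^ √N`: the long gap makes them negligible.
-/

section ForbiddenWords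

variable {x : ℤ → A} {F : Set (List A)} {u v w : List A}

theorem occursAt_iff_getElem {k : ℤ} :
    OccursAt w x k ↔ ∀ (i : ℕ) (h : i < w.length), x (k + i) = w[i] :=
  Fin.forall_iff

theorem occursAt_cons {a : A} {k : ℤ} :
    OccursAt (a :: w) x k ↔ x k = a ∧ OccursAt w x (k + 1) := by
  simp [OccursAt, Fin.forall_fin_succ, add_assoc, add_comm (1 : ℤ)]

theorem occursAt_append {k : ℤ} :
    OccursAt (u ++ v) x k ↔ OccursAt u x k ∧ OccursAt v x (k + u.length) := by
  induction u generalizing k with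
  | nil => simp [OccursAt]
  | cons a u ih => simp [occursAt_cons, ih, and_assoc, add_assoc, add_comm (1 : ℤ)]

theorem occursAt_shift {k : ℤ} : OccursAt w (shift x) k ↔ OccursAt w x (k + 1) := by
  simp [OccursAt, shift, add_right_comm]

theorem OccursAt.exists_of_infix {k : ℤ} (hw : OccursAt w x k) (hu : u <:+: w) :
    ∃ j, OccursAt u x j := by
  obtain ⟨s, t, rfl⟩ := hu
  exact ⟨_, (occursAt_append.1 (occursAt_append.1 hw).1).2⟩

theorem infix_of_occursAt {k : ℕ} (hw : OccursAt w x 0) (hu : OccursAt u x k)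
    (hk : k + u.length ≤ w.length) : u <:+: w := by
  rw [List.infix_iff_getElem?]
  refine ⟨k, by omega, fun i hi => ?_⟩
  have hwi := occursAt_iff_getElem.1 hw (i + k) (by omega)
  have hui := occursAt_iff_getElem.1 hu i hi
  rw [List.getElem?_eq_getElem (by omega), ← hwi, ← hui]
  congr 2
  push_cast
  ring

theorem infix_dropLast_or_infix_tail (h : u <:+: w) (hne : u ≠ w) :
    u <:+: w.dropLast ∨ u <:+: w.tail := by
  obtain ⟨s, t, rfl⟩ := h
  rcases s with _ | ⟨a, s⟩
  · have ht : t ≠ [] := by rintro rfl; simp at hne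
    exact .inl ⟨[], t.dropLast, by simp [List.dropLast_append_of_ne_nil ht]⟩
  · exact .inr ⟨s, t, by simp⟩

/-- The language of `X`: the words of all lengths occurring in elements of `X` at position `0`,
so that `Lang X n` is its part of length `n`. -/
def language (X : Set (ℤ → A)) : Set (List A) :=
  {w | ∃ x ∈ X, OccursAt w x 0}

/-- The space of bi-infinite sequences in which no word of `F` occurs. -/
def avoiding (F : Set (List A)) : Set (ℤ → A) :=
  {x | ∀ w ∈ F, ∀ k : ℤ, ¬ OccursAt w x k}

theorem shift_mem_avoiding : shift x ∈ avoiding F ↔ x ∈ avoiding F := by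
  simp only [avoiding, mem_ofPred_eq, occursAt_shift]
  exact forall₂_congr fun w _ =>
    ⟨fun h k => by simpa using h (k - 1), fun h k => h (k + 1)⟩

theorem shift_surjective : Function.Surjective (shift : (ℤ → A) → ℤ → A) := fun x =>
  ⟨fun n => x (n - 1), funext fun n => congrArg x (add_sub_cancel_right n 1)⟩

theorem isSubshift_avoiding [TopologicalSpace A] [DiscreteTopology A] (F : Set (List A)) :
    IsSubshift (avoiding F) := by
  constructor
  · have hopen (w : List A) (k : ℤ) : IsOpen {x : ℤ → A | OccursAt w x k} := by
      simp only [OccursAt, ← mem_singleton_iff, ofPred_forall]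
      exact isOpen_iInter_of_finite fun i => (isOpen_discrete _).preimage (continuous_apply _)
    simp only [avoiding, ofPred_forall]
    exact isClosed_biInter fun w _ => isClosed_iInter fun k => (hopen w k).isClosed_compl
  · have hpre : shift ⁻¹' avoiding F = avoiding F := Set.ext fun _ => shift_mem_avoiding
    simpa only [hpre] using image_preimage_eq (avoiding F) shift_surjective

theorem not_infix_of_mem_language_avoiding (hw : w ∈ language (avoiding F)) (hu : u ∈ F) :
    ¬ u <:+: w := by
  obtain ⟨x, hx, hwx⟩ := hw
  intro h
  obtain ⟨j, hj⟩ := hwx.exists_of_infix h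
  exact hx u hu j hj

/-- Extends the word `w`, placed at position `0`, by the constant letter `o` to the left and by
its own last letter to the right (by `o` if `w` is empty). -/
def constExtend (o : A) (w : List A) (i : ℤ) : A :=
  if i < 0 then o else w.getD i.toNat (w.getLastD o)

theorem occursAt_constExtend (o : A) (w : List A) : OccursAt w (constExtend o w) 0 := by
  rw [occursAt_iff_getElem]
  intro i hi
  simp [constExtend, hi]

theorem constExtend_of_length_le (o : A) {i : ℤ} (hi : (w.length : ℤ) ≤ i + 1) (hi₀ : 0 ≤ i) :
    constExtend o w i = w.getLastD o := by
  rw [constExtend, if_neg hi₀.not_gt]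
  obtain hlt | hle := lt_or_ge i.toNat w.length
  · have hlast : i.toNat = w.length - 1 := by omega
    rw [List.getD_eq_getElem _ _ hlt, List.getLastD_eq_getLast?, List.getLast?_eq_getElem?]
    simp [← hlast, hlt]
  · exact List.getD_eq_default _ _ hle

/-- In the constant extension of `w`, the condition on first letters keeps the words of `F` from
starting left of `w`, and the one on last letters from ending right of it. -/
theorem mem_language_avoiding {o : A} (hhead : ∀ u ∈ F, u.head? ≠ some o)
    (hlast : ∀ u ∈ F, ∃ s c d, u = s ++ [c, d] ∧ c ≠ d) (hw : ∀ u ∈ F, ¬ u <:+: w) :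
    w ∈ language (avoiding F) := by
  refine ⟨constExtend o w, fun u hu k hk => ?_, occursAt_constExtend o w⟩
  obtain ⟨s, c, d, rfl, hcd⟩ := hlast u hu
  have hk₀ : 0 ≤ k := by
    by_contra hneg
    apply hhead _ hu
    have h₀ := occursAt_iff_getElem.1 hk 0 (by simp)
    rw [List.head?_eq_getElem?, List.getElem?_eq_getElem (by simp), ← h₀, constExtend,
      if_pos (by simpa using hneg)]
  have hkw : k + s.length + 2 ≤ w.length := by
    by_contra hgt
    obtain ⟨-, hc, hd⟩ := by simpa only [occursAt_append, occursAt_cons] using hk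
    rw [constExtend_of_length_le o (by omega) (by omega)] at hc hd
    exact hcd (hc.symm.trans hd.1)
  lift k to ℕ using hk₀
  refine hw _ hu (infix_of_occursAt (occursAt_constExtend o w) hk ?_)
  rw [List.length_append, List.length_cons, List.length_singleton]
  omega

theorem minForbidden_avoiding_subset {o : A} (hhead : ∀ u ∈ F, u.head? ≠ some o)
    (hlast : ∀ u ∈ F, ∃ s c d, u = s ++ [c, d] ∧ c ≠ d) (n : ℕ) :
    MinForbidden (avoiding F) n ⊆ F := by
  rintro w ⟨hlen, hw, hdrop, htail⟩
  by_contra hwF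
  refine hw ⟨hlen, mem_language_avoiding hhead hlast fun u hu huw => ?_⟩
  have hne : u ≠ w := by rintro rfl; exact hwF hu
  rcases infix_dropLast_or_infix_tail huw hne with h | h
  · exact not_infix_of_mem_language_avoiding hdrop.2 hu h
  · exact not_infix_of_mem_language_avoiding htail.2 hu h

end ForbiddenWords

section LeftConstraints

variable {X : Set (ℤ → A)}

theorem mem_fol_iff {w : List A} {y : ℕ → A} :
    y ∈ fol X w ↔ ∃ B ∈ X, OccursAt w B 0 ∧ ∀ k : ℕ, y k = B (w.length - 1 + k) := by
  simp only [fol, OccursAt, mem_ofPred_eq, zero_add]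

theorem fol_nonempty_iff {w : List A} : (fol X w).Nonempty ↔ w ∈ language X := by
  constructor
  · rintro ⟨y, hy⟩
    obtain ⟨B, hB, hw, -⟩ := mem_fol_iff.1 hy
    exact ⟨B, hB, hw⟩
  · rintro ⟨B, hB, hw⟩
    exact ⟨_, mem_fol_iff.2 ⟨B, hB, hw, fun _ => rfl⟩⟩

theorem ELC_subset_Lang (X : Set (ℤ → A)) (n : ℕ) : ELC X n ⊆ Lang X n :=
  fun _ ⟨hlen, ⟨_, hne, _⟩, _⟩ => ⟨hlen, fol_nonempty_iff.1 (nonempty_iff_ne_empty.2 hne)⟩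

theorem fol_cons_subset (hX : MapsTo shift X X) (a : A) (w : List A) :
    fol X (a :: w) ⊆ fol X w := by
  intro y hy
  obtain ⟨B, hB, hw, hyB⟩ := mem_fol_iff.1 hy
  refine mem_fol_iff.2 ⟨shift B, hX hB, occursAt_shift.2 (occursAt_cons.1 hw).2, fun k => ?_⟩
  rw [hyB, shift]
  congr 1
  push_cast [List.length_cons]
  ring

theorem isLeftConstraint_cons_of_continuation (hX : MapsTo shift X X) {a : A} {w s : List A}
    (haw : a :: w ∈ language X) (hws : w ++ s ∈ language X) (haws : a :: w ++ s ∉ language X) :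
    IsLeftConstraint X (a :: w) := by
  refine ⟨List.cons_ne_nil a w, (fol_nonempty_iff.2 haw).ne_empty, fol_cons_subset hX a w, ?_⟩
  obtain ⟨B, hB, hwsB⟩ := hws
  rw [occursAt_append] at hwsB
  intro hsub
  have hBfol : (fun k : ℕ => B (w.length - 1 + k)) ∈ fol X w :=
    mem_fol_iff.2 ⟨B, hB, hwsB.1, fun _ => rfl⟩
  obtain ⟨C, hC, hawC, hBC⟩ := mem_fol_iff.1 (hsub hBfol)
  refine haws ⟨C, hC, occursAt_append.2 ⟨hawC, occursAt_iff_getElem.2 fun i hi => ?_⟩⟩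
  rw [← occursAt_iff_getElem.1 hwsB.2 i hi]
  convert! (hBC (i + 1)).symm using 2 <;> push_cast [List.length_cons] <;> ring

theorem wordOf_eq_cons (b : ℕ → A) (m : ℕ) : ∃ w, wordOf b m = b m :: w :=
  ⟨_, by rw [wordOf, List.range_succ_eq_map, List.map_cons, Nat.sub_zero]⟩

theorem wordOf_comp (f : A → B) (b : ℕ → A) (m : ℕ) : wordOf (f ∘ b) m = (wordOf b m).map f := by
  simp [wordOf]

theorem wordOf_reverse_getD (a d : A) (w : List A) :
    wordOf (fun j => (a :: w).reverse.getD j d) w.length = a :: w := by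
  apply List.ext_getElem
  · simp [wordOf]
  · intro i hi hi'
    have hle : i ≤ w.length := Nat.le_of_lt_succ hi'
    have hrev : w.length - i < (a :: w).reverse.length := by simp
    simp only [wordOf, List.getElem_map, List.getElem_range]
    rw [List.getD_eq_getElem _ _ hrev, List.getElem_reverse]
    congr 1
    rw [List.length_cons]
    omega

end LeftConstraints

section Counting

theorem ncard_length_eq (A : Type*) [Fintype A] (n : ℕ) :
    {w : List A | w.length = n}.ncard = Fintype.card A ^ n := by
  rw [← card_vector, ← Nat.card_eq_fintype_card]
  rfl

theorem finite_Lang [Finite A] (X : Set (ℤ → A)) (n : ℕ) : (Lang X n).Finite :=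
  (List.finite_length_eq A n).subset fun _ hw => hw.1

theorem finite_ELC [Finite A] (X : Set (ℤ → A)) (n : ℕ) : (ELC X n).Finite :=
  (finite_Lang X n).subset (ELC_subset_Lang X n)

theorem ncard_ELC_le_ncard_Lang [Finite A] (X : Set (ℤ → A)) (n : ℕ) :
    (ELC X n).ncard ≤ (Lang X n).ncard :=
  ncard_le_ncard (ELC_subset_Lang X n) (finite_Lang X n)

theorem tendsto_log_div_of_exponential_bounds {c : ℕ → ℕ} {b K : ℝ} (hb : 0 < b) (hK : 0 < K)
    (hlower : ∀ᶠ n in atTop, b ^ n ≤ K * c n) (hupper : ∀ᶠ n in atTop, c n ≤ K * b ^ n) :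
    Tendsto (fun n => Real.log (c n) / n) atTop (nhds (Real.log b)) := by
  have herror : Tendsto (fun n : ℕ => Real.log K / n) atTop (nhds 0) :=
    tendsto_const_nhds.div_atTop tendsto_natCast_atTop_atTop
  refine tendsto_iff_norm_sub_tendsto_zero.2 (squeeze_zero' (.of_forall fun _ => norm_nonneg _) ?_
    herror)
  filter_upwards [hlower, hupper, eventually_gt_atTop 0] with n hlow hup hn
  have hc : 0 < (c n : ℝ) := pos_of_mul_pos_right ((pow_pos hb n).trans_le hlow) hK.le
  have hlog_low := Real.log_le_log (by positivity) hlow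
  have hlog_up := Real.log_le_log hc hup
  rw [Real.log_mul hK.ne' (by positivity), Real.log_pow] at hlog_low hlog_up
  have hn₀ : (0 : ℝ) < n := by exact_mod_cast hn
  rw [Real.norm_eq_abs, div_sub' hn₀.ne', abs_div, abs_of_pos hn₀]
  gcongr
  exact abs_le.2 ⟨by linarith, by linarith⟩

theorem hM_eq_zero_of_card_le {X : Set (ℤ → A)} {b : ℕ} {s : ℕ → ℕ}
    (hs : Tendsto (fun n => (s n : ℝ) / n) atTop (nhds 0))
    (hcard : ∀ᶠ n in atTop, (MinForbidden X n).ncard ≤ b ^ s n) : hM X = 0 := by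
  refine Tendsto.limsup_eq (squeeze_zero' (.of_forall fun n => by positivity) ?_
    (by simpa using hs.mul_const (Real.posLog b)))
  filter_upwards [hcard] with n hn
  rw [div_mul_eq_mul_div, ← Real.posLog_pow]
  gcongr
  exact Real.posLog_le_posLog (Nat.cast_nonneg _) (by exact_mod_cast hn)

theorem tendsto_natSqrt_div_atTop :
    Tendsto (fun n : ℕ => (Nat.sqrt n : ℝ) / n) atTop (nhds 0) := by
  have hsqrt : Tendsto (fun n : ℕ => √(n : ℝ) / n) atTop (nhds 0) := by
    simp only [Real.sqrt_div_self]
    exact (Real.tendsto_sqrt_atTop.comp tendsto_natCast_atTop_atTop).inv_tendsto_atTop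
  refine squeeze_zero (fun n => by positivity) (fun n => ?_) hsqrt
  gcongr
  exact Real.nat_sqrt_le_real_sqrt

end Counting

/-- The alphabet of the example: free bits and the two letters delimiting a timed gap. -/
inductive Letter
  | bit (b : Bool)
  | gap
  | mark
  deriving DecidableEq, Fintype

namespace Letter

/-- The phase of a letter: the sequences of the example pass from bits to gaps to marks. -/
def phase : Letter → ℕ
  | bit _ => 0
  | gap => 1
  | mark => 2

instance : Preorder Letter := Preorder.lift phase

theorem bit_injective : Function.Injective bit := fun _ _ => bit.inj

theorem bit_le (b : Bool) (a : Letter) : bit b ≤ a := Nat.zero_le a.phase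

theorem le_mark : ∀ a : Letter, a ≤ mark := by decide

theorem eq_mark_of_mark_le : ∀ a : Letter, mark ≤ a → a = mark := by decide

theorem not_gap_le_bit : ∀ b : Bool, ¬ gap ≤ bit b := by decide

theorem not_mark_le_gap : ¬ mark ≤ gap := by decide

end Letter

open Letter

/-- The two-letter words of decreasing phase; forbidding them sorts the sequences by phase. -/
def descents : Set (List Letter) := {w | ∃ a b : Letter, ¬ a ≤ b ∧ w = [a, b]}

/-- The forbidden word coding `v`: the bits `1v`, then a gap of length `g |v|`, then a mark. -/
def gapWord (g : ℕ → ℕ) (v : List Bool) : List Letter :=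
  (true :: v).map bit ++ List.replicate (g v.length) gap ++ [mark]

/-- The example subshift: the sequences of nondecreasing phase in which no `gapWord g v` occurs.
The timing function `g` is injective in the entropy computations and `g m = m ^ 2` at the end. -/
def gapShift (g : ℕ → ℕ) : Set (ℤ → Letter) := avoiding (descents ∪ range (gapWord g))

section SortedWords

variable {w : List Letter}

theorem not_infix_of_mem_descents {u : List Letter} (hw : w.SortedLE) (hu : u ∈ descents) :
    ¬ u <:+: w := by
  obtain ⟨a, b, hab, rfl⟩ := hu
  intro h
  exact hab (List.pairwise_pair.1 (hw.pairwise.sublist h.sublist))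

theorem sortedLE_bits_gaps_mark (v : List Bool) (n : ℕ) :
    (v.map bit ++ List.replicate n gap ++ [mark]).SortedLE := by
  have hbit : ∀ a ∈ v.map bit, ∀ b, a ≤ b := by
    simp only [List.mem_map, forall_exists_index, and_imp, forall_apply_eq_imp_iff₂]
    exact fun b _ => bit_le b
  have hbits : (v.map bit).Pairwise (· ≤ ·) := List.pairwise_iff_forall_sublist.2 fun h =>
    hbit _ (h.subset List.mem_cons_self) _
  have hgaps : (List.replicate n gap).Pairwise (· ≤ ·) :=
    List.pairwise_replicate.2 (.inr le_rfl)
  rw [List.sortedLE_iff_pairwise, List.pairwise_append, List.pairwise_append]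
  refine ⟨⟨hbits, hgaps, fun a ha b _ => hbit a ha b⟩, List.pairwise_singleton _ _,
    fun a _ b hb => ?_⟩
  rw [List.mem_singleton.1 hb]
  exact le_mark a

theorem sortedLE_map_bit (v : List Bool) : (v.map bit).SortedLE :=
  ((sortedLE_bits_gaps_mark v 0).pairwise.sublist (by simp)).sortedLE

end SortedWords

section GapShift

variable {g : ℕ → ℕ} {w : List Letter}

theorem length_gapWord (g : ℕ → ℕ) (v : List Bool) :
    (gapWord g v).length = v.length + g v.length + 2 := by
  simp only [gapWord, List.length_append, List.length_map, List.length_cons,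
    List.length_replicate, List.length_nil]
  omega

theorem head?_ne_of_mem {u : List Letter} (hu : u ∈ descents ∪ range (gapWord g)) :
    u.head? ≠ some (bit false) := by
  rcases hu with ⟨a, b, hab, rfl⟩ | ⟨v, rfl⟩
  · rintro h
    obtain rfl : a = bit false := by simpa using h
    exact hab (bit_le _ _)
  · simp [gapWord]

theorem exists_eq_append_pair_of_mem {u : List Letter} (hu : u ∈ descents ∪ range (gapWord g)) :
    ∃ s c d, u = s ++ [c, d] ∧ c ≠ d := by
  rcases hu with ⟨a, b, hab, rfl⟩ | ⟨v, rfl⟩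
  · exact ⟨[], a, b, rfl, fun h => hab h.le⟩
  · obtain ⟨s, c, hsc⟩ := (List.eq_nil_or_concat' _).resolve_left
      (by simp : (true :: v).map bit ++ List.replicate (g v.length) gap ≠ [])
    have hc : c ∈ (true :: v).map bit ++ List.replicate (g v.length) gap := by
      rw [hsc]
      exact List.mem_append_right s (List.mem_singleton_self c)
    refine ⟨s, c, mark, by rw [gapWord, hsc, List.append_assoc]; rfl, ?_⟩
    rintro rfl
    simp at hc

theorem mem_language_gapShift (hw : w.SortedLE) (hgap : ∀ v, ¬ gapWord g v <:+: w) :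
    w ∈ language (gapShift g) := by
  refine mem_language_avoiding (fun u => head?_ne_of_mem) (fun u => exists_eq_append_pair_of_mem) ?_
  rintro u (hu | ⟨v, rfl⟩)
  · exact not_infix_of_mem_descents hw hu
  · exact hgap v

theorem sortedLE_of_mem_language_gapShift (hw : w ∈ language (gapShift g)) : w.SortedLE := by
  rw [List.sortedLE_iff_isChain, List.isChain_iff_forall_rel_of_append_cons_cons]
  rintro a b s t rfl
  by_contra hab
  refine not_infix_of_mem_language_avoiding hw (.inl ⟨a, b, hab, rfl⟩) ⟨s, t, ?_⟩
  simp

theorem gapWord_notMem_language (g : ℕ → ℕ) (v : List Bool) :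
    gapWord g v ∉ language (gapShift g) := fun h =>
  not_infix_of_mem_language_avoiding h (.inr (mem_range_self v)) List.infix_rfl

theorem map_bit_mem_language (g : ℕ → ℕ) (v : List Bool) :
    v.map bit ∈ language (gapShift g) := by
  refine mem_language_gapShift (sortedLE_map_bit v) fun v' h => ?_
  have hmark : mark ∈ v.map bit := h.mem (by simp [gapWord])
  simp at hmark

/-- Sortedness forces the gaps of an occurring `gapWord g v'` to be all the gaps, so `v'` is as
long as `v`; but then the word is too short to hold the leading `1`. -/
theorem not_gapWord_infix (hg : Function.Injective g) (v v' : List Bool) :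
    ¬ gapWord g v' <:+: v.map bit ++ List.replicate (g v.length) gap ++ [mark] := by
  rintro ⟨s, t, h⟩
  have hsorted := h ▸ sortedLE_bits_gaps_mark v (g v.length)
  rw [List.sortedLE_iff_pairwise, List.pairwise_append, List.pairwise_append] at hsorted
  obtain ⟨⟨-, -, hs⟩, -, ht⟩ := hsorted
  have hgap_s : gap ∉ s := fun hmem =>
    not_gap_le_bit true (hs gap hmem _ (by simp [gapWord]))
  have hgap_t : gap ∉ t := fun hmem =>
    not_mark_le_gap (ht mark (by simp [gapWord]) gap hmem)
  have hbits (v : List Bool) : gap ∉ v.map bit := by simp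
  have hcount := congrArg (List.count gap) h
  have hlen := congrArg List.length h
  simp only [gapWord, List.count_append, List.count_eq_zero_of_not_mem hgap_s,
    List.count_eq_zero_of_not_mem hgap_t, List.count_eq_zero_of_not_mem (hbits _),
    List.count_replicate_self, List.count_singleton] at hcount
  have heq : v'.length = v.length := hg (by simpa using hcount)
  simp only [List.length_append, length_gapWord, List.length_map, List.length_replicate, heq,
    List.length_singleton] at hlen
  omega

theorem isLeftConstraint_map_bit (hg : Function.Injective g) (v : List Bool) :
    IsLeftConstraint (gapShift g) ((true :: v).map bit) := by
  refine isLeftConstraint_cons_of_continuation (fun _ => shift_mem_avoiding.2)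
    (map_bit_mem_language g (true :: v))
    (s := List.replicate (g v.length) gap ++ [mark]) ?_ ?_
  · rw [← List.append_assoc]
    exact mem_language_gapShift (sortedLE_bits_gaps_mark v _) (not_gapWord_infix hg v)
  · rw [← List.append_assoc]
    exact gapWord_notMem_language g v

theorem isExtendable_map_bit (hg : Function.Injective g) (v : List Bool) :
    IsExtendable (gapShift g) ((true :: v).map bit) := by
  have hconstraint {c : ℕ → Bool} {m : ℕ} (hc : c m = true) :
      IsLeftConstraint (gapShift g) (wordOf (bit ∘ c) m) := by
    obtain ⟨w, hw⟩ := wordOf_eq_cons c m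
    rw [wordOf_comp, hw, hc]
    exact isLeftConstraint_map_bit hg w
  refine ⟨isLeftConstraint_map_bit hg v, bit ∘ fun j => (true :: v).reverse.getD j true, ?_,
    fun N => ⟨max N (v.length + 1), le_max_left _ _, hconstraint ?_⟩⟩
  · rw [wordOf_comp, List.length_map, List.length_cons, Nat.add_sub_cancel, wordOf_reverse_getD]
  · exact List.getD_eq_default _ _ (by simp)

theorem two_pow_le_ncard_ELC (hg : Function.Injective g) (n : ℕ) :
    2 ^ n ≤ (ELC (gapShift g) (n + 1)).ncard := by
  rw [← Fintype.card_bool, ← ncard_length_eq]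
  refine ncard_le_ncard_of_injOn (fun v => (true :: v).map bit) (fun v hv => ?_) ?_
    (finite_ELC _ _)
  · exact ⟨by simpa using hv, isExtendable_map_bit hg v⟩
  · exact ((List.map_injective_iff.2 bit_injective).comp (List.cons_injective)).injOn

theorem exists_gapWord_of_mem_minForbidden {n : ℕ} (hn : 3 ≤ n)
    (hw : w ∈ MinForbidden (gapShift g) n) :
    ∃ v, gapWord g v = w ∧ v.length + g v.length + 2 = n := by
  have hlen : w.length = n := hw.1
  obtain ⟨a, b, -, rfl⟩ | ⟨v, rfl⟩ := minForbidden_avoiding_subset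
    (fun u => head?_ne_of_mem) (fun u => exists_eq_append_pair_of_mem) n hw
  · rw [List.length_cons, List.length_singleton] at hlen
    omega
  · exact ⟨v, rfl, by rw [← hlen, length_gapWord]⟩

theorem ncard_minForbidden_gapShift_le (hg : Monotone g) {n k : ℕ} (hn : 3 ≤ n)
    (hk : ∀ m, m + g m + 2 = n → m ≤ k) : (MinForbidden (gapShift g) n).ncard ≤ 2 ^ k := by
  obtain hempty | ⟨w₀, hw₀⟩ := (MinForbidden (gapShift g) n).eq_empty_or_nonempty
  · simp [hempty]
  obtain ⟨v₀, -, hv₀⟩ := exists_gapWord_of_mem_minForbidden hn hw₀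
  have hmono : StrictMono fun m => m + g m + 2 := (strictMono_id.add_monotone hg).add_const 2
  have hsub : MinForbidden (gapShift g) n ⊆ gapWord g '' {v | v.length = v₀.length} := by
    intro w hw
    obtain ⟨v, rfl, hv⟩ := exists_gapWord_of_mem_minForbidden hn hw
    exact ⟨v, hmono.injective (hv.trans hv₀.symm), rfl⟩
  have hfin : {v : List Bool | v.length = v₀.length}.Finite := List.finite_length_eq Bool _
  calc (MinForbidden (gapShift g) n).ncard
      ≤ (gapWord g '' {v | v.length = v₀.length}).ncard := ncard_le_ncard hsub (hfin.image _)
    _ ≤ {v : List Bool | v.length = v₀.length}.ncard := ncard_image_le hfin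
    _ = 2 ^ v₀.length := by rw [ncard_length_eq, Fintype.card_bool]
    _ ≤ 2 ^ k := Nat.pow_le_pow_right two_pos (hk _ hv₀)

theorem hM_gapShift_sq : hM (gapShift (· ^ 2)) = 0 := by
  refine hM_eq_zero_of_card_le (b := 2) tendsto_natSqrt_div_atTop ?_
  filter_upwards [eventually_ge_atTop 3] with n hn
  refine ncard_minForbidden_gapShift_le (fun _ _ h => Nat.pow_le_pow_left h 2) hn fun m hm => ?_
  rw [Nat.le_sqrt']
  omega

end GapShift

section SortedCount

theorem finite_sorted (n : ℕ) : {w : List Letter | w.length = n ∧ w.SortedLE}.Finite :=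
  (List.finite_length_eq Letter n).subset fun _ hw => hw.1

theorem finite_sorted_bitless (n : ℕ) :
    {w : List Letter | w.length = n ∧ w.SortedLE ∧ ∀ a ∈ w, gap ≤ a}.Finite :=
  (finite_sorted n).subset fun _ hw => ⟨hw.1, hw.2.1⟩

theorem ncard_sorted_bitless_le (n : ℕ) :
    {w : List Letter | w.length = n ∧ w.SortedLE ∧ ∀ a ∈ w, gap ≤ a}.ncard ≤ n + 1 := by
  induction n with
  | zero =>
    refine (ncard_le_ncard (t := {[]}) ?_).trans (ncard_singleton _).le
    rintro w ⟨hw, -⟩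
    exact List.length_eq_zero_iff.1 hw
  | succ n ih =>
    set S := {w : List Letter | w.length = n ∧ w.SortedLE ∧ ∀ a ∈ w, gap ≤ a}
    have hS : S.Finite := finite_sorted_bitless n
    have hsub : {w : List Letter | w.length = n + 1 ∧ w.SortedLE ∧ ∀ a ∈ w, gap ≤ a} ⊆
        insert (List.replicate (n + 1) mark) (List.cons gap '' S) := by
      rintro (_ | ⟨b | _ | _, w⟩) ⟨hlen, hw, hgap⟩
      · exact absurd hlen.symm (Nat.succ_ne_zero n)
      · exact absurd (hgap (bit b) (by simp)) (not_gap_le_bit b)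
      · exact .inr ⟨w, ⟨Nat.succ.inj hlen, hw.pairwise.of_cons.sortedLE,
          fun a ha => hgap a (List.mem_cons_of_mem _ ha)⟩, rfl⟩
      · refine .inl (List.eq_replicate_iff.2 ⟨hlen, fun a ha => eq_mark_of_mark_le a ?_⟩)
        rcases List.mem_cons.1 ha with rfl | ha
        · exact le_rfl
        · exact List.rel_of_pairwise_cons hw.pairwise ha
    calc _ ≤ (insert (List.replicate (n + 1) mark) (List.cons gap '' S)).ncard :=
          ncard_le_ncard hsub ((hS.image _).insert _)
      _ ≤ (List.cons gap '' S).ncard + 1 := ncard_insert_le _ _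
      _ ≤ n + 1 + 1 := by grw [ncard_image_le hS, ih]

theorem sorted_succ_subset (n : ℕ) :
    {w : List Letter | w.length = n + 1 ∧ w.SortedLE} ⊆
      List.cons (bit false) '' {w | w.length = n ∧ w.SortedLE} ∪
        List.cons (bit true) '' {w | w.length = n ∧ w.SortedLE} ∪
        {w | w.length = n + 1 ∧ w.SortedLE ∧ ∀ a ∈ w, gap ≤ a} := by
  rintro (_ | ⟨a, w⟩) ⟨hlen, hw⟩
  · simp at hlen
  have htail : w.length = n ∧ w.SortedLE := ⟨Nat.succ.inj hlen, hw.pairwise.of_cons.sortedLE⟩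
  have hhead (h : gap ≤ a) : ∀ b ∈ a :: w, gap ≤ b := by
    rintro b (_ | ⟨_, hb⟩)
    · exact h
    · exact h.trans (List.rel_of_pairwise_cons hw.pairwise hb)
  rcases a with (_ | _) | _ | _
  · exact .inl (.inl ⟨w, htail, rfl⟩)
  · exact .inl (.inr ⟨w, htail, rfl⟩)
  · exact .inr ⟨hlen, hw, hhead le_rfl⟩
  · exact .inr ⟨hlen, hw, hhead (le_mark gap)⟩

/-- The summand `n + 3` makes the bound inductive: it absorbs the `n + 2` bitless words added at
each step. -/
theorem ncard_sorted_add_le (n : ℕ) :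
    {w : List Letter | w.length = n ∧ w.SortedLE}.ncard + (n + 3) ≤ 4 * 2 ^ n := by
  induction n with
  | zero =>
    have hsub : {w : List Letter | w.length = 0 ∧ w.SortedLE} ⊆ {[]} := fun w hw =>
      List.length_eq_zero_iff.1 hw.1
    grw [ncard_le_ncard hsub, ncard_singleton]
    norm_num
  | succ n ih =>
    have hfin := finite_sorted n
    have hcons (a : Letter) : (List.cons a '' {w | w.length = n ∧ w.SortedLE}).ncard ≤
        {w : List Letter | w.length = n ∧ w.SortedLE}.ncard := ncard_image_le hfin
    have hcard := ncard_le_ncard (sorted_succ_subset n)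
      (((hfin.image _).union (hfin.image _)).union (finite_sorted_bitless (n + 1)))
    grw [ncard_union_le, ncard_union_le, hcons, hcons, ncard_sorted_bitless_le] at hcard
    rw [pow_succ]
    omega

end SortedCount

section Entropy

variable {g : ℕ → ℕ}

theorem ncard_Lang_gapShift_le (g : ℕ → ℕ) (n : ℕ) : (Lang (gapShift g) n).ncard ≤ 4 * 2 ^ n := by
  have hsub : Lang (gapShift g) n ⊆ {w | w.length = n ∧ w.SortedLE} := fun _ hw =>
    ⟨hw.1, sortedLE_of_mem_language_gapShift hw.2⟩
  exact (ncard_le_ncard hsub (finite_sorted n)).trans (le_of_add_le_left (ncard_sorted_add_le n))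

theorem two_pow_le_four_mul_ncard_ELC (hg : Function.Injective g) {n : ℕ} (hn : 1 ≤ n) :
    2 ^ n ≤ 4 * (ELC (gapShift g) n).ncard := by
  obtain ⟨m, rfl⟩ := Nat.exists_eq_add_of_le' hn
  have hpow := two_pow_le_ncard_ELC hg m
  rw [pow_succ]
  omega

theorem hTop_gapShift (hg : Function.Injective g) : hTop (gapShift g) = Real.log 2 := by
  refine (tendsto_log_div_of_exponential_bounds two_pos four_pos ?_ ?_).limsup_eq
  · filter_upwards [eventually_ge_atTop 1] with n hn
    exact_mod_cast (two_pow_le_four_mul_ncard_ELC hg hn).trans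
      (Nat.mul_le_mul_left 4 (ncard_ELC_le_ncard_Lang _ n))
  · exact .of_forall fun n => by exact_mod_cast ncard_Lang_gapShift_le g n

theorem hCstar_gapShift (hg : Function.Injective g) : hCstar (gapShift g) = Real.log 2 := by
  refine (tendsto_log_div_of_exponential_bounds two_pos four_pos ?_ ?_).limsup_eq
  · filter_upwards [eventually_ge_atTop 1] with n hn
    exact_mod_cast two_pow_le_four_mul_ncard_ELC hg hn
  · exact .of_forall fun n => by
      exact_mod_cast (ncard_ELC_le_ncard_Lang _ n).trans (ncard_Lang_gapShift_le g n)

end Entropy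

/-- There is a subshift with vanishing entropy of minimal
forbidden words and yet `h*_𝒞(X) = h_top(X) > 0`. -/
theorem minForbidden_zero_but_hCstar_full :
    ∃ (A : Type) (_ : Fintype A) (X : Set (ℤ → A)),
      (letI : TopologicalSpace A := ⊥
       IsSubshift X) ∧
      hM X = 0 ∧ hCstar X = hTop X ∧ 0 < hTop X := by
  have hsq : Function.Injective fun m : ℕ => m ^ 2 := Nat.pow_left_injective two_ne_zero
  have htop := hTop_gapShift hsq
  let _ : TopologicalSpace Letter := ⊥
  have : DiscreteTopology Letter := ⟨rfl⟩
  refine ⟨Letter, inferInstance, gapShift (· ^ 2), isSubshift_avoiding _, hM_gapShift_sq,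
    (hCstar_gapShift hsq).trans htop.symm, ?_⟩
  rw [htop]
  exact Real.log_pos one_lt_two

end QFTPaper
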